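/- Let M(1),…,M(n) be an n-outcome POVM on ℂ^d ⊗ ℂ^k, let ρ₁, ρ₂ be density matrices on ℂ^d, let ξ₁, ξ₂ be density matrices on ℂ^k, and let λ₁, λ₂ be post-processings from n outcomes to m outcomes. Then F(ρ₁,ρ₂)·F(ξ₁,ξ₂)·F(λ₁,λ₂) ≤ Σ_{y=1}^m (Σ_{i=1}^n λ₁(i|y)·Tr[M(i)(ρ₁⊗ξ₁)])^{1/2} · (Σ_{i=1}^n λ₂(i|y)·Tr[M(i)(ρ₂⊗ξ₂)])^{1/2}, where ⊗ denotes the Kronecker product of matrices. -/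

import Mathlib

open scoped BigOperators Kronecker ComplexOrder Matrix

noncomputable section

/-- The positive semidefinite square root of a positive semidefinite matrix
(the definition of the older Mathlib, since removed). -/
noncomputable def Matrix.PosSemidef.sqrt {n : Type*} {𝕜 : Type*} [Fintype n] [RCLike 𝕜]
    [DecidableEq n] {A : Matrix n n 𝕜} (hA : A.PosSemidef) : Matrix n n 𝕜 :=
  hA.1.eigenvectorUnitary.1 *
    Matrix.diagonal ((RCLike.ofReal : ℝ → 𝕜) ∘ Real.sqrt ∘ hA.1.eigenvalues) *
    (star hA.1.eigenvectorUnitary : Matrix n n 𝕜)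

namespace QProg

/-- The positive-semidefinite square root of a matrix, extended by `0` to all matrices. -/
noncomputable def matSqrt {α : Type*} [Fintype α] [DecidableEq α]
    (A : Matrix α α ℂ) : Matrix α α ℂ :=
  @dite _ A.PosSemidef (Classical.propDecidable _) (fun h => h.sqrt) (fun _ => 0)

/-- The fidelity `F(ρ,σ) = Tr √(√ρ σ √ρ)` of two (density) matrices. -/
noncomputable def fid {α : Type*} [Fintype α] [DecidableEq α]
    (ρ σ : Matrix α α ℂ) : ℝ :=
  ((matSqrt (matSqrt ρ * σ * matSqrt ρ)).trace).re

/-- A density matrix: positive semidefinite with unit trace. -/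
def IsDensity {α : Type*} [Fintype α] [DecidableEq α] (ρ : Matrix α α ℂ) : Prop :=
  ρ.PosSemidef ∧ ρ.trace = 1

/-- An `n`-outcome POVM: positive semidefinite effects summing to the identity. -/
def IsPOVM {α : Type*} [Fintype α] [DecidableEq α] {n : ℕ}
    (E : Fin n → Matrix α α ℂ) : Prop :=
  (∀ i, (E i).PosSemidef) ∧ ∑ i, E i = 1

/-- The outcome distribution `p^E_ρ(i) = Tr[E(i) ρ]`. -/
noncomputable def outDist {α : Type*} [Fintype α] [DecidableEq α] {n : ℕ}
    (E : Fin n → Matrix α α ℂ) (ρ : Matrix α α ℂ) (i : Fin n) : ℝ :=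
  ((E i * ρ).trace).re

/-- The Bhattacharyya coefficient `B(p,q) = ∑ᵢ √(p i) √(q i)`. -/
noncomputable def bhat {n : ℕ} (p q : Fin n → ℝ) : ℝ :=
  ∑ i, Real.sqrt (p i) * Real.sqrt (q i)

/-- `B(E₁,E₂)`: infimum of `B(p^{E₁}_{ρ₁}, p^{E₂}_{ρ₂}) / F(ρ₁,ρ₂)` over pairs of
density matrices with nonvanishing fidelity. -/
noncomputable def obsB {α : Type*} [Fintype α] [DecidableEq α] {n : ℕ}
    (E₁ E₂ : Fin n → Matrix α α ℂ) : ℝ :=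
  sInf { r : ℝ | ∃ ρ₁ ρ₂ : Matrix α α ℂ, IsDensity ρ₁ ∧ IsDensity ρ₂ ∧
    fid ρ₁ ρ₂ ≠ 0 ∧ r = bhat (outDist E₁ ρ₁) (outDist E₂ ρ₂) / fid ρ₁ ρ₂ }

/-- A post-processing from `n` outcomes to `m` outcomes. -/
def IsPostProc {n m : ℕ} (lam : Fin n → Fin m → ℝ) : Prop :=
  (∀ i y, 0 ≤ lam i y) ∧ ∀ i, ∑ y, lam i y = 1

/-- The action `(λ⋆E)(y) = ∑ᵢ λ(i|y) E(i)` of a post-processing on a POVM. -/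
noncomputable def ppStar {α : Type*} [Fintype α] [DecidableEq α] {n m : ℕ}
    (lam : Fin n → Fin m → ℝ) (E : Fin n → Matrix α α ℂ) (y : Fin m) :
    Matrix α α ℂ :=
  ∑ i, (lam i y : ℂ) • E i

/-- The action `(λ⋆p)(y) = ∑ᵢ λ(i|y) p(i)` of a post-processing on a probability vector. -/
noncomputable def ppStarVec {n m : ℕ} (lam : Fin n → Fin m → ℝ) (p : Fin n → ℝ)
    (y : Fin m) : ℝ :=
  ∑ i, lam i y * p i

/-- A probability vector on `{1,…,n}`. -/
def IsProbVec {n : ℕ} (p : Fin n → ℝ) : Prop :=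
  (∀ i, 0 ≤ p i) ∧ ∑ i, p i = 1

/-- `F(λ₁,λ₂)`: infimum of `B(λ₁⋆p, λ₂⋆p)` over probability vectors `p`. -/
noncomputable def ppF {n m : ℕ} (lam₁ lam₂ : Fin n → Fin m → ℝ) : ℝ :=
  sInf { r : ℝ | ∃ p : Fin n → ℝ, IsProbVec p ∧
    r = bhat (ppStarVec lam₁ p) (ppStarVec lam₂ p) }

/-!
The fidelity is multiplicative on Kronecker products, because Kronecker products of positive
semidefinite square roots are again such square roots, so it suffices to treat a single pair of
states `ρ`, `σ`. There `F(ρ, σ) = Tr |√σ √ρ| = Tr (Vᴴ √σ √ρ)` for a contraction `V`; inserting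
`∑ i, E i = 1` between the two roots and applying the Cauchy–Schwarz inequality for the trace to
each summand bounds the fidelity by the Bhattacharyya coefficient of the outcome distributions.
For the post-processing, a point mass at `i` bounds `F(λ₁, λ₂)` by the Bhattacharyya coefficient of
the `i`-th rows, and the Cauchy–Schwarz inequality for each outcome `y` recombines the rows.
-/

open scoped MatrixOrder

section MatrixSqrt

variable {α β 𝕜 : Type*} [Fintype α] [Fintype β] [RCLike 𝕜]

lemma exists_isHermitian_pseudoinverse {S : Matrix α α 𝕜} (hS : S.IsHermitian) :
    ∃ T : Matrix α α 𝕜, T.IsHermitian ∧ Commute T S ∧ S * T * S = S ∧ T * S * T = T := by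
  classical
  have hcont (f : ℝ → ℝ) : ContinuousOn f (spectrum ℝ S) := S.finite_real_spectrum.continuousOn f
  have cfc_mul_cfc (f g : ℝ → ℝ) : cfc f S * cfc g S = cfc (fun x ↦ f x * g x) S :=
    (cfc_mul f g S (hcont f) (hcont g)).symm
  have cfc_id_self : cfc (fun x : ℝ ↦ x) S = S := cfc_id' ℝ S hS
  set T : Matrix α α 𝕜 := cfc (fun x : ℝ ↦ x⁻¹) S with hT
  refine ⟨T, cfc_predicate _ S, ?_, ?_, ?_⟩
  · simpa only [cfc_id_self] using cfc_commute_cfc (fun x : ℝ ↦ x⁻¹) (fun x ↦ x) S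
  · calc S * T * S = cfc (fun x : ℝ ↦ x * x⁻¹ * x) S := by
          rw [← cfc_mul_cfc, ← cfc_mul_cfc, cfc_id_self]
      _ = S := by simp only [mul_inv_mul_cancel, cfc_id_self]
  · calc T * S * T = cfc (fun x : ℝ ↦ x⁻¹ * x⁻¹⁻¹ * x⁻¹) S := by
          rw [← cfc_mul_cfc, ← cfc_mul_cfc, ← hT]
          simp only [inv_inv, cfc_id_self]
      _ = T := by simp only [mul_inv_mul_cancel, hT]

variable [DecidableEq α] [DecidableEq β]

lemma matSqrt_eq_cfcSqrt (A : Matrix α α ℂ) : matSqrt A = CFC.sqrt A := by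
  by_cases hA : A.PosSemidef
  · rw [matSqrt, dif_pos hA, CFC.sqrt_eq_real_sqrt A hA.nonneg, cfcₙ_eq_cfc, hA.1.cfc_eq]
    rfl
  · rw [matSqrt, dif_neg hA, CFC.sqrt_of_not_nonneg (mt Matrix.nonneg_iff_posSemidef.mp hA)]

lemma posSemidef_cfcSqrt (A : Matrix α α 𝕜) : (CFC.sqrt A).PosSemidef :=
  Matrix.nonneg_iff_posSemidef.mp (CFC.sqrt_nonneg A)

lemma cfcSqrt_kronecker {A : Matrix α α 𝕜} {B : Matrix β β 𝕜}
    (hA : A.PosSemidef) (hB : B.PosSemidef) :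
    CFC.sqrt (A ⊗ₖ B) = CFC.sqrt A ⊗ₖ CFC.sqrt B := by
  refine CFC.sqrt_unique ?_ ((posSemidef_cfcSqrt A).kronecker (posSemidef_cfcSqrt B)).nonneg
  rw [← Matrix.mul_kronecker_mul, CFC.sqrt_mul_sqrt_self A hA.nonneg,
    CFC.sqrt_mul_sqrt_self B hB.nonneg]

-- With `T` the pseudoinverse of `√(Xᴴ X)`, the polar partial isometry of `X` is `X T`.
lemma exists_contraction_conjTranspose_mul_eq_cfcSqrt (X : Matrix β α 𝕜) :
    ∃ V : Matrix β α 𝕜, V * Vᴴ ≤ 1 ∧ Vᴴ * X = CFC.sqrt (Xᴴ * X) := by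
  set S : Matrix α α 𝕜 := CFC.sqrt (Xᴴ * X)
  have hSS : S * S = Xᴴ * X :=
    CFC.sqrt_mul_sqrt_self _ (Matrix.posSemidef_conjTranspose_mul_self X).nonneg
  obtain ⟨T, hT, hTS, hSTS, hTST⟩ :=
    exists_isHermitian_pseudoinverse (posSemidef_cfcSqrt (Xᴴ * X)).isHermitian
  have hTSS : T * (S * S) = S := by rw [← mul_assoc, hTS.eq, hSTS]
  refine ⟨X * T, IsStarProjection.le_one ⟨?_, ?_⟩, ?_⟩
  · calc X * T * (X * T)ᴴ * (X * T * (X * T)ᴴ)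
        = X * (T * (T * (Xᴴ * X)) * T * T) * Xᴴ := by
          simp only [Matrix.conjTranspose_mul, hT.eq, Matrix.mul_assoc]
      _ = X * T * (X * T)ᴴ := by
          rw [← hSS, hTSS, hTST]
          simp only [Matrix.conjTranspose_mul, hT.eq, Matrix.mul_assoc]
  · exact Matrix.isHermitian_mul_conjTranspose_self (X * T)
  · rw [Matrix.conjTranspose_mul, hT.eq, Matrix.mul_assoc, ← hSS, hTSS]

end MatrixSqrt

section Trace

variable {k l m n 𝕜 : Type*} [Fintype k] [Fintype l] [Fintype m] [Fintype n] [RCLike 𝕜]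

lemma trace_mul_nonneg {A B : Matrix n n 𝕜} (hA : A.PosSemidef) (hB : B.PosSemidef) :
    0 ≤ (A * B).trace := by
  classical
  obtain ⟨C, rfl⟩ := CStarAlgebra.nonneg_iff_eq_star_mul_self.mp hB.nonneg
  rw [← mul_assoc, Matrix.trace_mul_comm, ← mul_assoc]
  exact (hA.mul_mul_conjTranspose_same C).trace_nonneg

lemma trace_mul_le_trace_mul {A B C : Matrix n n 𝕜} (hAB : A ≤ B) (hC : C.PosSemidef) :
    (A * C).trace ≤ (B * C).trace := by
  rw [← sub_nonneg, ← Matrix.trace_sub, ← sub_mul]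
  exact trace_mul_nonneg (Matrix.le_iff.mp hAB) hC

lemma norm_trace_conjTranspose_mul_le (A B : Matrix m n 𝕜) :
    ‖(Aᴴ * B).trace‖ ≤ √(RCLike.re (Aᴴ * A).trace) * √(RCLike.re (Bᴴ * B).trace) := by
  have inner_vec (C D : Matrix m n 𝕜) :
      inner 𝕜 (WithLp.toLp 2 C.vec) (WithLp.toLp 2 D.vec) = (Cᴴ * D).trace := by
    rw [EuclideanSpace.inner_toLp_toLp, dotProduct_comm, Matrix.star_vec_dotProduct_vec]
  simpa only [norm_eq_sqrt_re_inner (𝕜 := 𝕜) (WithLp.toLp 2 (Matrix.vec _)), inner_vec] using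
    norm_inner_le_norm (𝕜 := 𝕜) (WithLp.toLp 2 A.vec) (WithLp.toLp 2 B.vec)

lemma trace_conjTranspose_mul_self_mul (A : Matrix m n 𝕜) (B : Matrix n l 𝕜) :
    ((A * B)ᴴ * (A * B)).trace = (Aᴴ * A * (B * Bᴴ)).trace := by
  rw [Matrix.conjTranspose_mul, Matrix.mul_assoc, Matrix.trace_mul_comm]
  simp only [Matrix.mul_assoc]

lemma trace_conjTranspose_mul_self_mul_contraction_le [DecidableEq k] {V : Matrix k l 𝕜}
    (hV : V * Vᴴ ≤ 1) (A : Matrix n k 𝕜) :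
    ((A * V)ᴴ * (A * V)).trace ≤ (Aᴴ * A).trace :=
  calc ((A * V)ᴴ * (A * V)).trace = (V * Vᴴ * (Aᴴ * A)).trace := by
        rw [trace_conjTranspose_mul_self_mul, Matrix.trace_mul_comm]
    _ ≤ (1 * (Aᴴ * A)).trace :=
        trace_mul_le_trace_mul hV (Matrix.posSemidef_conjTranspose_mul_self A)
    _ = (Aᴴ * A).trace := by rw [one_mul]

lemma norm_trace_contraction_mul_le [DecidableEq k] {V : Matrix k l 𝕜} (hV : V * Vᴴ ≤ 1)
    {E : Matrix n n 𝕜} (hE : E.PosSemidef) (A : Matrix n l 𝕜) (B : Matrix n k 𝕜) :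
    ‖(Vᴴ * (Bᴴ * E * A)).trace‖ ≤
      √(RCLike.re (E * (A * Aᴴ)).trace) * √(RCLike.re (E * (B * Bᴴ)).trace) := by
  classical
  obtain ⟨N, hN : E = Nᴴ * N⟩ := CStarAlgebra.nonneg_iff_eq_star_mul_self.mp hE.nonneg
  calc ‖(Vᴴ * (Bᴴ * E * A)).trace‖ = ‖((N * B * V)ᴴ * (N * A)).trace‖ := by
        simp only [hN, Matrix.conjTranspose_mul, Matrix.mul_assoc]
    _ ≤ √(RCLike.re ((N * B * V)ᴴ * (N * B * V)).trace) * √(RCLike.re ((N * A)ᴴ * (N * A)).trace) :=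
        norm_trace_conjTranspose_mul_le _ _
    _ ≤ √(RCLike.re ((N * B)ᴴ * (N * B)).trace) * √(RCLike.re ((N * A)ᴴ * (N * A)).trace) := by
        gcongr
        exact trace_conjTranspose_mul_self_mul_contraction_le hV (N * B)
    _ = √(RCLike.re (E * (A * Aᴴ)).trace) * √(RCLike.re (E * (B * Bᴴ)).trace) := by
        rw [mul_comm, hN, trace_conjTranspose_mul_self_mul, trace_conjTranspose_mul_self_mul]

end Trace

section Fidelity

variable {α β : Type*} [Fintype α] [DecidableEq α] [Fintype β] [DecidableEq β]

lemma fid_eq_re_trace_cfcSqrt (ρ σ : Matrix α α ℂ) :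
    fid ρ σ = (CFC.sqrt (CFC.sqrt ρ * σ * CFC.sqrt ρ)).trace.re := by
  simp only [fid, matSqrt_eq_cfcSqrt]

lemma posSemidef_cfcSqrt_mul_mul_cfcSqrt (ρ : Matrix α α ℂ) {σ : Matrix α α ℂ}
    (hσ : σ.PosSemidef) : (CFC.sqrt ρ * σ * CFC.sqrt ρ).PosSemidef := by
  simpa only [(posSemidef_cfcSqrt ρ).isHermitian.eq] using
    hσ.conjTranspose_mul_mul_same (CFC.sqrt ρ)

lemma fid_kronecker {ρ₁ ρ₂ : Matrix α α ℂ} {ξ₁ ξ₂ : Matrix β β ℂ}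
    (hρ₁ : ρ₁.PosSemidef) (hρ₂ : ρ₂.PosSemidef) (hξ₁ : ξ₁.PosSemidef) (hξ₂ : ξ₂.PosSemidef) :
    fid (ρ₁ ⊗ₖ ξ₁) (ρ₂ ⊗ₖ ξ₂) = fid ρ₁ ρ₂ * fid ξ₁ ξ₂ := by
  have im_trace_eq_zero (A : Matrix α α ℂ) : (CFC.sqrt A).trace.im = 0 :=
    (Complex.nonneg_iff.mp (posSemidef_cfcSqrt A).trace_nonneg).2.symm
  simp only [fid_eq_re_trace_cfcSqrt, cfcSqrt_kronecker hρ₁ hξ₁, ← Matrix.mul_kronecker_mul,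
    cfcSqrt_kronecker (posSemidef_cfcSqrt_mul_mul_cfcSqrt ρ₁ hρ₂)
      (posSemidef_cfcSqrt_mul_mul_cfcSqrt ξ₁ hξ₂),
    Matrix.trace_kronecker, Complex.mul_re, im_trace_eq_zero, zero_mul, sub_zero]

theorem fid_le_bhat_outDist {n : ℕ} {E : Fin n → Matrix α α ℂ} (hE : IsPOVM E)
    {ρ σ : Matrix α α ℂ} (hρ : ρ.PosSemidef) (hσ : σ.PosSemidef) :
    fid ρ σ ≤ bhat (outDist E ρ) (outDist E σ) := by
  set A : Matrix α α ℂ := CFC.sqrt ρ with hA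
  set B : Matrix α α ℂ := CFC.sqrt σ
  have hA_herm : Aᴴ = A := (posSemidef_cfcSqrt ρ).isHermitian
  have hB_herm : Bᴴ = B := (posSemidef_cfcSqrt σ).isHermitian
  have hAA : A * A = ρ := CFC.sqrt_mul_sqrt_self ρ hρ.nonneg
  have hBB : B * B = σ := CFC.sqrt_mul_sqrt_self σ hσ.nonneg
  obtain ⟨V, hV, hVBA⟩ := exists_contraction_conjTranspose_mul_eq_cfcSqrt (B * A)
  have hgram : (B * A)ᴴ * (B * A) = A * σ * A := by
    simp only [Matrix.conjTranspose_mul, hA_herm, hB_herm, ← hBB, Matrix.mul_assoc]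
  calc fid ρ σ = (Vᴴ * (B * A)).trace.re := by
        rw [fid_eq_re_trace_cfcSqrt, ← hA, hVBA, hgram]
    _ = ∑ i, (Vᴴ * (Bᴴ * E i * A)).trace.re := by
        rw [← Complex.re_sum, ← Matrix.trace_sum, ← Finset.mul_sum, ← Finset.sum_mul,
          ← Finset.mul_sum, hE.2, mul_one, hB_herm]
    _ ≤ ∑ i, √(E i * (A * Aᴴ)).trace.re * √(E i * (B * Bᴴ)).trace.re :=
        Finset.sum_le_sum fun i _ ↦
          (Complex.re_le_norm _).trans (norm_trace_contraction_mul_le hV (hE.1 i) A B)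
    _ = bhat (outDist E ρ) (outDist E σ) := by
        simp only [hA_herm, hB_herm, hAA, hBB, bhat, outDist]

lemma outDist_nonneg {n : ℕ} {E : Fin n → Matrix α α ℂ} {ρ : Matrix α α ℂ} {i : Fin n}
    (hE : (E i).PosSemidef) (hρ : ρ.PosSemidef) : 0 ≤ outDist E ρ i :=
  (Complex.nonneg_iff.mp (trace_mul_nonneg hE hρ)).1

end Fidelity

section PostProcessing

variable {n m : ℕ}

lemma bhat_nonneg (p q : Fin n → ℝ) : 0 ≤ bhat p q :=
  Finset.sum_nonneg fun _ _ ↦ by positivity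

lemma ppF_nonneg (lam₁ lam₂ : Fin n → Fin m → ℝ) : 0 ≤ ppF lam₁ lam₂ := by
  apply Real.sInf_nonneg
  rintro _ ⟨p, -, rfl⟩
  exact bhat_nonneg _ _

lemma ppF_le_bhat_ppStarVec (lam₁ lam₂ : Fin n → Fin m → ℝ) {p : Fin n → ℝ} (hp : IsProbVec p) :
    ppF lam₁ lam₂ ≤ bhat (ppStarVec lam₁ p) (ppStarVec lam₂ p) := by
  refine csInf_le ⟨0, ?_⟩ ⟨p, hp, rfl⟩
  rintro _ ⟨q, -, rfl⟩
  exact bhat_nonneg _ _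

lemma isProbVec_single (i : Fin n) : IsProbVec (Pi.single i 1) :=
  ⟨fun j ↦ (Pi.single_nonneg.mpr zero_le_one : (0 : Fin n → ℝ) ≤ Pi.single i 1) j,
    Fintype.sum_pi_single' i 1⟩

lemma ppStarVec_single (lam : Fin n → Fin m → ℝ) (i : Fin n) :
    ppStarVec lam (Pi.single i 1) = lam i := by
  ext y
  simp [ppStarVec, Pi.single_apply]

lemma ppF_le_bhat_apply (lam₁ lam₂ : Fin n → Fin m → ℝ) (i : Fin n) :
    ppF lam₁ lam₂ ≤ bhat (lam₁ i) (lam₂ i) := by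
  simpa only [ppStarVec_single] using ppF_le_bhat_ppStarVec lam₁ lam₂ (isProbVec_single i)

theorem bhat_mul_ppF_le {lam₁ lam₂ : Fin n → Fin m → ℝ} {p q : Fin n → ℝ}
    (hlam₁ : ∀ i y, 0 ≤ lam₁ i y) (hlam₂ : ∀ i y, 0 ≤ lam₂ i y)
    (hp : ∀ i, 0 ≤ p i) (hq : ∀ i, 0 ≤ q i) :
    bhat p q * ppF lam₁ lam₂ ≤ bhat (ppStarVec lam₁ p) (ppStarVec lam₂ q) :=
  calc bhat p q * ppF lam₁ lam₂
      = ∑ i, √(p i) * √(q i) * ppF lam₁ lam₂ := Finset.sum_mul _ _ _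
    _ ≤ ∑ i, √(p i) * √(q i) * bhat (lam₁ i) (lam₂ i) := by
        gcongr with i
        exact ppF_le_bhat_apply lam₁ lam₂ i
    _ = ∑ y, ∑ i, √(lam₁ i y * p i) * √(lam₂ i y * q i) := by
        simp only [bhat, Finset.mul_sum, Real.sqrt_mul (hlam₁ _ _), Real.sqrt_mul (hlam₂ _ _)]
        rw [Finset.sum_comm]
        exact Finset.sum_congr rfl fun y _ ↦ Finset.sum_congr rfl fun i _ ↦ by ring
    _ ≤ bhat (ppStarVec lam₁ p) (ppStarVec lam₂ q) :=
        Finset.sum_le_sum fun y _ ↦ Real.sum_sqrt_mul_sqrt_le _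
          (fun i ↦ mul_nonneg (hlam₁ i y) (hp i)) (fun i ↦ mul_nonneg (hlam₂ i y) (hq i))

end PostProcessing

theorem postprocessing_programming_inequality_general {α β : Type*} [Fintype α] [DecidableEq α]
    [Fintype β] [DecidableEq β] {n m : ℕ}
    {M : Fin n → Matrix (α × β) (α × β) ℂ} (hM : IsPOVM M)
    {ρ₁ ρ₂ : Matrix α α ℂ} (hρ₁ : ρ₁.PosSemidef) (hρ₂ : ρ₂.PosSemidef)
    {ξ₁ ξ₂ : Matrix β β ℂ} (hξ₁ : ξ₁.PosSemidef) (hξ₂ : ξ₂.PosSemidef)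
    {lam₁ lam₂ : Fin n → Fin m → ℝ}
    (hlam₁ : ∀ i y, 0 ≤ lam₁ i y) (hlam₂ : ∀ i y, 0 ≤ lam₂ i y) :
    fid ρ₁ ρ₂ * fid ξ₁ ξ₂ * ppF lam₁ lam₂ ≤
      bhat (ppStarVec lam₁ (outDist M (ρ₁ ⊗ₖ ξ₁))) (ppStarVec lam₂ (outDist M (ρ₂ ⊗ₖ ξ₂))) := by
  have h₁ : (ρ₁ ⊗ₖ ξ₁).PosSemidef := hρ₁.kronecker hξ₁
  have h₂ : (ρ₂ ⊗ₖ ξ₂).PosSemidef := hρ₂.kronecker hξ₂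
  calc fid ρ₁ ρ₂ * fid ξ₁ ξ₂ * ppF lam₁ lam₂
      = fid (ρ₁ ⊗ₖ ξ₁) (ρ₂ ⊗ₖ ξ₂) * ppF lam₁ lam₂ := by rw [fid_kronecker hρ₁ hρ₂ hξ₁ hξ₂]
    _ ≤ bhat (outDist M (ρ₁ ⊗ₖ ξ₁)) (outDist M (ρ₂ ⊗ₖ ξ₂)) * ppF lam₁ lam₂ :=
        mul_le_mul_of_nonneg_right (fid_le_bhat_outDist hM h₁ h₂) (ppF_nonneg lam₁ lam₂)
    _ ≤ bhat (ppStarVec lam₁ (outDist M (ρ₁ ⊗ₖ ξ₁))) (ppStarVec lam₂ (outDist M (ρ₂ ⊗ₖ ξ₂))) :=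
        bhat_mul_ppF_le hlam₁ hlam₂ (fun i ↦ outDist_nonneg (hM.1 i) h₁)
          (fun i ↦ outDist_nonneg (hM.1 i) h₂)

/-- Proposition 3: the inequality for post-processing assisted programming,
`F(ρ₁,ρ₂) F(ξ₁,ξ₂) F(λ₁,λ₂) ≤ B(λ₁⋆p^M_{ρ₁⊗ξ₁}, λ₂⋆p^M_{ρ₂⊗ξ₂})`. -/
theorem postprocessing_programming_inequality {d k n m : ℕ}
    (M : Fin n → Matrix (Fin d × Fin k) (Fin d × Fin k) ℂ) (hM : IsPOVM M)
    (ρ₁ ρ₂ : Matrix (Fin d) (Fin d) ℂ) (hρ₁ : IsDensity ρ₁) (hρ₂ : IsDensity ρ₂)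
    (ξ₁ ξ₂ : Matrix (Fin k) (Fin k) ℂ) (hξ₁ : IsDensity ξ₁) (hξ₂ : IsDensity ξ₂)
    (lam₁ lam₂ : Fin n → Fin m → ℝ) (hlam₁ : IsPostProc lam₁) (hlam₂ : IsPostProc lam₂) :
    fid ρ₁ ρ₂ * fid ξ₁ ξ₂ * ppF lam₁ lam₂ ≤
      ∑ y, Real.sqrt (∑ i, lam₁ i y * (M i * (ρ₁ ⊗ₖ ξ₁)).trace.re) *
        Real.sqrt (∑ i, lam₂ i y * (M i * (ρ₂ ⊗ₖ ξ₂)).trace.re) :=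
  postprocessing_programming_inequality_general hM hρ₁.1 hρ₂.1 hξ₁.1 hξ₂.1 hlam₁.1 hlam₂.1

end QProg
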